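/- arXiv:1512.04680 — 3 statements merged into one kernel-verified Lean document; each statement's English description precedes it below -/
import Mathlib

section
/- For every r ≥ 0, one cycle of the cyclic BCPG iteration decreases the objective by at least the weighted squared block movement: f(x^{(r)}) − f(x^{(r+1)}) ≥ Σ_{k=1}^K (P_k/2) ‖x_k^{(r+1)} − x_k^{(r)}‖². -/
open Finset

/-- Squared Euclidean norm of a vector in `ℝ^n`. -/
noncomputable def sqnorm {n : ℕ} (v : Fin n → ℝ) : ℝ := ∑ i, v i ^ 2

/-- Euclidean inner product on `ℝ^n`. -/
noncomputable def dotp {n : ℕ} (u v : Fin n → ℝ) : ℝ := ∑ i, u i * v i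

/-- `λ_max(AᵀA)` for a real matrix `A`, characterized as the maximum of `‖Av‖²`
over unit vectors `v`. -/
noncomputable def lamMaxQ {M N : ℕ} (A : Matrix (Fin M) (Fin N) ℝ) : ℝ :=
  sSup {r : ℝ | ∃ v : Fin N → ℝ, sqnorm v = 1 ∧ r = sqnorm (A.mulVec v)}

/-- `λ_min(AᵀA)` for a real matrix `A`, characterized as the minimum of `‖Av‖²`
over unit vectors `v`. -/
noncomputable def lamMinQ {M N : ℕ} (A : Matrix (Fin M) (Fin N) ℝ) : ℝ :=
  sInf {r : ℝ | ∃ v : Fin N → ℝ, sqnorm v = 1 ∧ r = sqnorm (A.mulVec v)}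

/-- `λ_max(AᵀA)` for the concatenated matrix `A = [A_1 ⋯ A_K]`, acting on block
vectors. -/
noncomputable def lamMaxBlock {K M N : ℕ} (A : Fin K → Matrix (Fin M) (Fin N) ℝ) : ℝ :=
  sSup {r : ℝ | ∃ v : Fin K → Fin N → ℝ, (∑ k, sqnorm (v k)) = 1 ∧
    r = sqnorm (∑ k, (A k).mulVec (v k))}

/-- Maximum of a finite family of reals indexed by `Fin K`, `K ≥ 1`. -/
noncomputable def maxOf {K : ℕ} (hK : 1 ≤ K) (P : Fin K → ℝ) : ℝ :=
  Finset.univ.sup' (Finset.univ_nonempty_iff.mpr ⟨⟨0, hK⟩⟩) P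

/-- Minimum of a finite family of reals indexed by `Fin K`, `K ≥ 1`. -/
noncomputable def minOf {K : ℕ} (hK : 1 ≤ K) (P : Fin K → ℝ) : ℝ :=
  Finset.univ.inf' (Finset.univ_nonempty_iff.mpr ⟨⟨0, hK⟩⟩) P

/-- The residual `Σ_k A_k x_k − b`. -/
noncomputable def resid {K M N : ℕ} (A : Fin K → Matrix (Fin M) (Fin N) ℝ)
    (b : Fin M → ℝ) (x : Fin K → Fin N → ℝ) : Fin M → ℝ :=
  (∑ k, (A k).mulVec (x k)) - b

/-- The smooth part `g(x) = (1/2)‖Σ_k A_k x_k − b‖²`. -/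
noncomputable def gq {K M N : ℕ} (A : Fin K → Matrix (Fin M) (Fin N) ℝ)
    (b : Fin M → ℝ) (x : Fin K → Fin N → ℝ) : ℝ :=
  (1 / 2) * sqnorm (resid A b x)

/-- The objective `f(x) = g(x) + Σ_k h_k(x_k)`. -/
noncomputable def fq {K M N : ℕ} (A : Fin K → Matrix (Fin M) (Fin N) ℝ)
    (b : Fin M → ℝ) (h : Fin K → (Fin N → ℝ) → ℝ) (x : Fin K → Fin N → ℝ) : ℝ :=
  gq A b x + ∑ k, h k (x k)

/-- The partial gradient `∇_k g(x) = A_kᵀ (Σ_j A_j x_j − b)`. -/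
noncomputable def gradk {K M N : ℕ} (A : Fin K → Matrix (Fin M) (Fin N) ℝ)
    (b : Fin M → ℝ) (x : Fin K → Fin N → ℝ) (k : Fin K) : Fin N → ℝ :=
  ((A k).transpose).mulVec (resid A b x)

/-- The intermediate point `w_k^{(r+1)}` of the cycle: blocks `j < k` come from
`x^{(r+1)} = xp`, the remaining blocks from `x^{(r)} = x`. -/
def wpt {K N : ℕ} (x xp : Fin K → Fin N → ℝ) (k : Fin K) : Fin K → Fin N → ℝ :=
  fun j => if j < k then xp j else x j

/-- The objective of the `k`-th BCPG prox subproblem at the point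
`w_k^{(r+1)} = wpt x xp k`, evaluated at candidate block `y`. -/
noncomputable def bcpgObj {K M N : ℕ} (A : Fin K → Matrix (Fin M) (Fin N) ℝ)
    (b : Fin M → ℝ) (h : Fin K → (Fin N → ℝ) → ℝ) (P : Fin K → ℝ)
    (x xp : Fin K → Fin N → ℝ) (k : Fin K) (y : Fin N → ℝ) : ℝ :=
  dotp (gradk A b (wpt x xp k) k) (y - x k) + (P k / 2) * sqnorm (y - x k) + h k y

/-- One cycle of cyclic BCPG: `xp = x^{(r+1)}` is obtained from `x = x^{(r)}`
by letting, for `k = 1,…,K`, the `k`-th block minimize the prox subproblem at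
`w_k^{(r+1)}` over `X_k`. -/
def BCPGStep {K M N : ℕ} (A : Fin K → Matrix (Fin M) (Fin N) ℝ)
    (b : Fin M → ℝ) (h : Fin K → (Fin N → ℝ) → ℝ)
    (X : Fin K → Set (Fin N → ℝ)) (P : Fin K → ℝ)
    (x xp : Fin K → Fin N → ℝ) : Prop :=
  ∀ k : Fin K, xp k ∈ X k ∧ ∀ y ∈ X k,
    bcpgObj A b h P x xp k (xp k) ≤ bcpgObj A b h P x xp k y

/-- One cycle of cyclic exact BCD: `xp = x^{(r+1)}` is obtained from
`x = x^{(r)}` by letting, for `k = 1,…,K`, the `k`-th block minimize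
`f(x_1^{(r+1)},…,x_{k−1}^{(r+1)}, ·, x_{k+1}^{(r)},…,x_K^{(r)})` over `X_k`. -/
def BCDStep {K M N : ℕ} (A : Fin K → Matrix (Fin M) (Fin N) ℝ)
    (b : Fin M → ℝ) (h : Fin K → (Fin N → ℝ) → ℝ)
    (X : Fin K → Set (Fin N → ℝ))
    (x xp : Fin K → Fin N → ℝ) : Prop :=
  ∀ k : Fin K, xp k ∈ X k ∧ ∀ y ∈ X k,
    fq A b h (Function.update (wpt x xp k) k (xp k)) ≤
      fq A b h (Function.update (wpt x xp k) k y)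

/-! The optimality condition of a block subproblem, tested at the old block, bounds the linear model
`⟨∇ₖg(w), d⟩ + hₖ(xₖ + d) - hₖ(xₖ)` of the change along the block movement `d` by `-Pₖ‖d‖²`. Since
`g` is quadratic, that model misses the change of `f` by exactly `½‖Aₖd‖² ≤ (Pₖ/2)‖d‖²`, so the
update of block `k` lowers `f` by at least `(Pₖ/2)‖d‖²`. These decreases telescope over the
cycle. -/

section Updates

variable {ι : Type*} {α : ι → Type*} {G : Type*} [AddCommGroup G]

lemma sum_apply_update [Fintype ι] [DecidableEq ι] (φ : ∀ i, α i → G) (w : ∀ i, α i) (k : ι)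
    (y : α k) :
    ∑ i, φ i (Function.update w k y i) = ∑ i, φ i (w i) + (φ k y - φ k (w k)) := by
  simp only [Function.apply_update φ, Finset.sum_update_of_mem (mem_univ k),
    ← Finset.add_sum_erase univ (fun i => φ i (w i)) (mem_univ k), Finset.sdiff_singleton_eq_erase]
  abel

lemma sum_sub_update_piecewise [LinearOrder ι] (F : (∀ i, α i) → G) (x y : ∀ i, α i)
    (s : Finset ι) :
    ∑ k ∈ s, (F ({j ∈ s | j < k}.piecewise y x) -
        F (Function.update ({j ∈ s | j < k}.piecewise y x) k (y k))) =
      F x - F (s.piecewise y x) := by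
  induction s using Finset.induction_on_max with
  | empty => simp only [sum_empty, piecewise_empty, sub_self]
  | insert a s ha ih =>
    have below_max : {j ∈ insert a s | j < a} = s := by
      rw [filter_insert, if_neg (lt_irrefl a), filter_true_of_mem ha]
    have below_old : ∀ k ∈ s, {j ∈ insert a s | j < k} = {j ∈ s | j < k} := fun k hk => by
      rw [filter_insert, if_neg (ha k hk).not_gt]
    rw [sum_insert fun has => lt_irrefl a (ha a has), below_max,
      sum_congr rfl fun k hk => by rw [below_old k hk], ih, ← piecewise_insert]
    abel

end Updates

lemma lineDeriv_add_sub_nonneg_of_isMinOn {E : Type*} [AddCommGroup E] [Module ℝ E] {s : Set E}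
    {q φ : E → ℝ} {q' : ℝ} {y z : E} (hφ : ConvexOn ℝ s φ)
    (hmin : IsMinOn (fun v => q v + φ v) s y) (hy : y ∈ s) (hz : z ∈ s)
    (hq : HasLineDerivAt ℝ q q' y (z - y)) :
    0 ≤ q' + φ z - φ y := by
  have slope_ge : ∀ t ∈ Set.Ioo (0 : ℝ) 1, φ y - φ z ≤ t⁻¹ * (q (y + t • (z - y)) - q y) := by
    intro t ht
    have combo : y + t • (z - y) = (1 - t) • y + t • z := by module
    have hmin_t := hmin (hφ.1.add_smul_sub_mem hy hz ⟨ht.1.le, ht.2.le⟩)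
    have hφ_t := hφ.2 hy hz (sub_nonneg.2 ht.2.le) ht.1.le (sub_add_cancel 1 t)
    rw [← combo] at hφ_t
    simp only [smul_eq_mul, Set.mem_ofPred_eq] at hmin_t hφ_t
    rw [le_inv_mul_iff₀ ht.1]
    linarith
  have slope_tendsto := hq.tendsto_slope_zero_right
  simp only [smul_eq_mul] at slope_tendsto
  have := ge_of_tendsto slope_tendsto
    (Filter.eventually_of_mem (Ioo_mem_nhdsGT one_pos) slope_ge)
  linarith

section EuclideanVectors

variable {m n : ℕ}

lemma sqnorm_eq_dotProduct (v : Fin n → ℝ) : sqnorm v = v ⬝ᵥ v :=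
  sum_congr rfl fun i _ => sq (v i)

lemma dotp_eq_dotProduct (u v : Fin n → ℝ) : dotp u v = u ⬝ᵥ v := rfl

lemma sqnorm_nonneg (v : Fin n → ℝ) : 0 ≤ sqnorm v :=
  sum_nonneg fun i _ => sq_nonneg (v i)

lemma sqnorm_smul (c : ℝ) (v : Fin n → ℝ) : sqnorm (c • v) = c ^ 2 * sqnorm v := by
  simp only [sqnorm, mul_sum, Pi.smul_apply, smul_eq_mul, mul_pow]

lemma sqnorm_add (u v : Fin n → ℝ) : sqnorm (u + v) = sqnorm u + 2 * dotp u v + sqnorm v := by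
  simp only [sqnorm_eq_dotProduct, dotp_eq_dotProduct, add_dotProduct, dotProduct_add,
    dotProduct_comm v u]
  ring

lemma hasLineDerivAt_dotp_sub_add_sqnorm_sub (c x y d : Fin n → ℝ) (p : ℝ) :
    HasLineDerivAt ℝ (fun v => dotp c (v - x) + p / 2 * sqnorm (v - x))
      (dotp c d + p * dotp (y - x) d) y d := by
  have expand : ∀ t : ℝ, dotp c (y + t • d - x) + p / 2 * sqnorm (y + t • d - x) =
      (dotp c (y - x) + p / 2 * sqnorm (y - x)) + t * (dotp c d + p * dotp (y - x) d) +
        t ^ 2 * (p / 2 * sqnorm d) := by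
    intro t
    rw [add_sub_right_comm, sqnorm_add, sqnorm_smul]
    simp only [dotp_eq_dotProduct, dotProduct_add, dotProduct_smul, smul_eq_mul]
    ring
  simp only [HasLineDerivAt, expand]
  have linear := (hasDerivAt_id' (0 : ℝ)).mul_const (dotp c d + p * dotp (y - x) d)
  have quadratic := (hasDerivAt_pow 2 (0 : ℝ)).mul_const (p / 2 * sqnorm d)
  simpa using (linear.const_add (dotp c (y - x) + p / 2 * sqnorm (y - x))).fun_add quadratic

lemma dotp_add_mul_sqnorm_add_le_of_isMinOn {s : Set (Fin n → ℝ)} {φ : (Fin n → ℝ) → ℝ}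
    {c x y : Fin n → ℝ} {p : ℝ} (hφ : ConvexOn ℝ s φ) (hx : x ∈ s) (hy : y ∈ s)
    (hmin : IsMinOn (fun v => dotp c (v - x) + p / 2 * sqnorm (v - x) + φ v) s y) :
    dotp c (y - x) + p * sqnorm (y - x) + φ y ≤ φ x := by
  have optimality := lineDeriv_add_sub_nonneg_of_isMinOn hφ hmin hy hx
    (hasLineDerivAt_dotp_sub_add_sqnorm_sub c x y (x - y) p)
  rw [← neg_sub y x] at optimality
  simp only [dotp_eq_dotProduct, dotProduct_neg, ← sqnorm_eq_dotProduct] at optimality ⊢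
  linarith

lemma dotp_transpose_mulVec (A : Matrix (Fin m) (Fin n) ℝ) (u : Fin m → ℝ) (v : Fin n → ℝ) :
    dotp (A.transpose.mulVec u) v = dotp u (A.mulVec v) := by
  rw [dotp_eq_dotProduct, dotp_eq_dotProduct, Matrix.mulVec_transpose, Matrix.dotProduct_mulVec]

lemma sqnorm_mulVec_le_sum_sq_mul (A : Matrix (Fin m) (Fin n) ℝ) (v : Fin n → ℝ) :
    sqnorm (A.mulVec v) ≤ (∑ i, ∑ j, A i j ^ 2) * sqnorm v := by
  rw [sum_mul]
  exact sum_le_sum fun i _ => sum_mul_sq_le_sq_mul_sq univ (A i) v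

lemma sqnorm_mulVec_le_lamMaxQ {A : Matrix (Fin m) (Fin n) ℝ} {v : Fin n → ℝ}
    (hv : sqnorm v = 1) : sqnorm (A.mulVec v) ≤ lamMaxQ A := by
  refine le_csSup ⟨∑ i, ∑ j, A i j ^ 2, ?_⟩ ⟨v, hv, rfl⟩
  rintro _ ⟨w, hw, rfl⟩
  simpa only [hw, mul_one] using sqnorm_mulVec_le_sum_sq_mul A w

lemma sqnorm_mulVec_le_lamMaxQ_mul (A : Matrix (Fin m) (Fin n) ℝ) (v : Fin n → ℝ) :
    sqnorm (A.mulVec v) ≤ lamMaxQ A * sqnorm v := by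
  rcases (sqnorm_nonneg v).eq_or_lt with hzero | hpos
  · have hv : v = 0 := by rwa [sqnorm_eq_dotProduct, eq_comm, dotProduct_self_eq_zero] at hzero
    simp [hv, sqnorm]
  · have inv_sqrt_sq : (√(sqnorm v))⁻¹ ^ 2 = (sqnorm v)⁻¹ := by
      rw [inv_pow, Real.sq_sqrt hpos.le]
    have unit : sqnorm ((√(sqnorm v))⁻¹ • v) = 1 := by
      rw [sqnorm_smul, inv_sqrt_sq, inv_mul_cancel₀ hpos.ne']
    have bound := sqnorm_mulVec_le_lamMaxQ (A := A) unit
    rwa [Matrix.mulVec_smul, sqnorm_smul, inv_sqrt_sq, inv_mul_le_iff₀ hpos, mul_comm] at bound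

end EuclideanVectors

section BlockUpdate

variable {K M N : ℕ} (A : Fin K → Matrix (Fin M) (Fin N) ℝ) (b : Fin M → ℝ)
  (h : Fin K → (Fin N → ℝ) → ℝ) (w : Fin K → Fin N → ℝ) (k : Fin K) (y : Fin N → ℝ)

lemma resid_update :
    resid A b (Function.update w k y) = resid A b w + (A k).mulVec (y - w k) := by
  rw [resid, resid, sum_apply_update (fun j => (A j).mulVec), Matrix.mulVec_sub, add_sub_right_comm]

lemma gq_update :
    gq A b (Function.update w k y) =
      gq A b w + dotp (gradk A b w k) (y - w k) + 1 / 2 * sqnorm ((A k).mulVec (y - w k)) := by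
  rw [gq, gq, gradk, resid_update, sqnorm_add, dotp_transpose_mulVec]
  ring

lemma fq_update :
    fq A b h (Function.update w k y) =
      fq A b h w + dotp (gradk A b w k) (y - w k) + 1 / 2 * sqnorm ((A k).mulVec (y - w k)) +
        (h k y - h k (w k)) := by
  rw [fq, fq, gq_update, sum_apply_update h]
  ring

variable {A b h w k y}

lemma mul_sqnorm_le_fq_sub_fq_update {s : Set (Fin N → ℝ)} {p : ℝ} (hh : ConvexOn ℝ s (h k))
    (hp : lamMaxQ (A k) ≤ p) (hw : w k ∈ s) (hy : y ∈ s)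
    (hmin : IsMinOn
      (fun v => dotp (gradk A b w k) (v - w k) + p / 2 * sqnorm (v - w k) + h k v) s y) :
    p / 2 * sqnorm (y - w k) ≤ fq A b h w - fq A b h (Function.update w k y) := by
  have model_decrease := dotp_add_mul_sqnorm_add_le_of_isMinOn hh hw hy hmin
  have curvature : sqnorm ((A k).mulVec (y - w k)) ≤ p * sqnorm (y - w k) :=
    (sqnorm_mulVec_le_lamMaxQ_mul (A k) (y - w k)).trans
      (mul_le_mul_of_nonneg_right hp (sqnorm_nonneg _))
  rw [fq_update]
  linarith

end BlockUpdate

section Cycle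

variable {K N : ℕ} (x xp : Fin K → Fin N → ℝ)

lemma wpt_self (k : Fin K) : wpt x xp k k = x k := if_neg (lt_irrefl k)

lemma wpt_eq_piecewise (k : Fin K) : wpt x xp k = (univ.filter (· < k)).piecewise xp x := by
  funext j
  simp only [wpt, Finset.piecewise, mem_filter, mem_univ, true_and]

lemma sum_sub_update_wpt {G : Type*} [AddCommGroup G] (F : (Fin K → Fin N → ℝ) → G) :
    ∑ k, (F (wpt x xp k) - F (Function.update (wpt x xp k) k (xp k))) = F x - F xp := by
  simpa only [wpt_eq_piecewise, piecewise_univ] using sum_sub_update_piecewise F x xp univ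

end Cycle

theorem bcpg_sufficient_descent_general {K M N : ℕ}
    (A : Fin K → Matrix (Fin M) (Fin N) ℝ) (b : Fin M → ℝ)
    (X : Fin K → Set (Fin N → ℝ)) (h : Fin K → (Fin N → ℝ) → ℝ)
    (hh : ∀ k, ConvexOn ℝ (X k) (h k))
    (P : Fin K → ℝ) (hP : ∀ k, lamMaxQ (A k) ≤ P k)
    (x xp : Fin K → Fin N → ℝ) (hx : ∀ k, x k ∈ X k)
    (hstep : BCPGStep A b h X P x xp) :
    ∑ k, (P k / 2) * sqnorm (xp k - x k) ≤ fq A b h x - fq A b h xp := by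
  have block_descent : ∀ k, P k / 2 * sqnorm (xp k - x k) ≤
      fq A b h (wpt x xp k) - fq A b h (Function.update (wpt x xp k) k (xp k)) := by
    intro k
    obtain ⟨hmem, hmin⟩ := hstep k
    simp only [bcpgObj, ← wpt_self x xp k] at hmin
    have hxk := hx k
    rw [← wpt_self x xp k] at hxk ⊢
    exact mul_sqnorm_le_fq_sub_fq_update (hh k) (hP k) hxk hmem hmin
  exact (sum_le_sum fun k _ => block_descent k).trans_eq (sum_sub_update_wpt x xp (fq A b h))

/-- Lemma 1, sufficient descent of cyclic BCPG:
`f(x^{(r)}) − f(x^{(r+1)}) ≥ Σ_k (P_k/2)‖x_k^{(r+1)} − x_k^{(r)}‖²`. -/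
theorem bcpg_sufficient_descent {K M N : ℕ} (hK : 1 ≤ K) (hM : 1 ≤ M) (hN : 1 ≤ N)
    (A : Fin K → Matrix (Fin M) (Fin N) ℝ) (b : Fin M → ℝ)
    (X : Fin K → Set (Fin N → ℝ)) (h : Fin K → (Fin N → ℝ) → ℝ)
    (hXne : ∀ k, (X k).Nonempty) (hXcl : ∀ k, IsClosed (X k))
    (hXcv : ∀ k, Convex ℝ (X k))
    (hhcv : ∀ k, ConvexOn ℝ Set.univ (h k))
    (hhlsc : ∀ k, LowerSemicontinuous (h k))
    (P : Fin K → ℝ) (hP : ∀ k, lamMaxQ (A k) ≤ P k)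
    (x xp : Fin K → Fin N → ℝ) (hx : ∀ k, x k ∈ X k)
    (hstep : BCPGStep A b h X P x xp) :
    ∑ k, (P k / 2) * sqnorm (xp k - x k) ≤ fq A b h x - fq A b h xp :=
  bcpg_sufficient_descent_general A b X h
    (fun k => (hhcv k).subset (Set.subset_univ _) (hXcv k)) P hP x xp hx hstep
end

section
/- If the cyclic BCPG stepsize parameters are chosen as P_k = L for every k, then for all r ≥ 0 the iterates satisfy Δ^{(r+1)} := f(x^{(r+1)}) − f* ≤ 3 · max{ Δ^{(0)}, 4 log²(2NK) · L · R_0² } / (r+1). -/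
open Finset

/-! Cycling through the blocks makes the prox subproblem of block `k` use a residual that ignores
the moves of the blocks `j ≥ k`. The resulting error in the gap `f(x⁺) - f(y)` is the value of a
block upper triangular bilinear form at `(x⁺ - y, x⁺ - x)`. Splitting the blocks recursively in
halves writes the strictly triangular part as `⌈log₂ K⌉` layers of products over disjoint sets of
blocks, and each layer costs only `L / 4`, so triangular truncation loses a logarithm instead of a
factor `K`. Since a cycle also decreases `f` by at least `(L / 2) ‖x⁺ - x‖²`, the gaps satisfy
`Δ₊² ≤ σ (Δ - Δ₊)`, and this recursion forces the rate `1 / r`. -/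

theorem le_div_add_one_of_sq_le_mul_sub {a : ℕ → ℝ} {σ C : ℝ} (hσ : 0 ≤ σ) (hC : 2 * σ ≤ C)
    (h0 : a 0 ≤ C) (ha : ∀ r, a (r + 1) ^ 2 ≤ σ * (a r - a (r + 1))) (r : ℕ) :
    a r ≤ C / (r + 1) := by
  induction r with
  | zero => simpa using h0
  | succ r ih =>
    have hr : (0 : ℝ) ≤ r := r.cast_nonneg
    push_cast
    rw [le_div_iff₀ (by positivity)] at ih ⊢
    by_contra! hlt
    have hpos : 0 < a (r + 1) := pos_of_mul_pos_left
      (((mul_nonneg zero_le_two hσ).trans hC).trans_lt hlt) (by positivity)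
    have hsq : (r + 1) * a (r + 1) * a (r + 1) ≤ σ * a (r + 1) :=
      calc (r + 1) * a (r + 1) * a (r + 1) = (r + 1) * a (r + 1) ^ 2 := by ring
        _ ≤ (r + 1) * (σ * (a r - a (r + 1))) := by gcongr; exact ha r
        _ = σ * (a r * (r + 1) - (r + 1) * a (r + 1)) := by ring
        _ ≤ σ * a (r + 1) := by gcongr; linarith
    have hle : (r + 1) * a (r + 1) ≤ σ := le_of_mul_le_mul_right hsq hpos
    have : 0 ≤ r * a (r + 1) := by positivity
    linarith

theorem sq_le_of_forall_mul_le {S κ p q : ℝ} (h : ∀ t : ℝ, t * S ≤ κ * (p + t ^ 2 * q)) :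
    S ^ 2 ≤ 4 * κ ^ 2 * (p * q) := by
  have hd : discrim (κ * q) (-S) (κ * p) ≤ 0 := discrim_le_zero fun t ↦ by linarith [h t]
  rw [discrim] at hd
  linarith

section DyadicSplitting

variable {ι : Type*} [LinearOrder ι]

theorem exists_union_eq_forall_lt_card_le (m n : ℕ) (s : Finset ι) (hs : #s ≤ m + n) :
    ∃ t u, t ∪ u = s ∧ (∀ i ∈ t, ∀ j ∈ u, i < j) ∧ #t ≤ m ∧ #u ≤ n := by
  induction m generalizing s with
  | zero => exact ⟨∅, s, by simpa using hs⟩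
  | succ m ih =>
    rcases s.eq_empty_or_nonempty with rfl | hne
    · exact ⟨∅, ∅, by simp⟩
    set a := s.min' hne
    have ha : a ∈ s := s.min'_mem hne
    obtain ⟨t, u, htu, hlt, ht, hu⟩ := ih (s.erase a) (by rw [card_erase_of_mem ha]; omega)
    refine ⟨insert a t, u, by rw [insert_union, htu, insert_erase ha], ?_,
      (card_insert_le a t).trans (by omega), hu⟩
    intro i hi j hj
    rcases mem_insert.1 hi with rfl | hi
    · exact min'_lt_of_mem_erase_min' s hne (htu ▸ mem_union_right t hj)
    · exact hlt i hi j hj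

theorem sum_union_sum_filter_lt {M : Type*} [AddCommMonoid M] (W : ι → ι → M) {t u : Finset ι}
    (htu : ∀ i ∈ t, ∀ j ∈ u, i < j) :
    ∑ i ∈ t ∪ u, ∑ j ∈ t ∪ u with i < j, W i j =
      ∑ i ∈ t, ∑ j ∈ t with i < j, W i j + ∑ i ∈ u, ∑ j ∈ u with i < j, W i j +
        ∑ i ∈ t, ∑ j ∈ u, W i j := by
  have hdisj : Disjoint t u := disjoint_left.2 fun i hi hi' ↦ (htu i hi i hi').false
  have ht : ∀ i ∈ t, ∑ j ∈ t ∪ u with i < j, W i j =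
      ∑ j ∈ t with i < j, W i j + ∑ j ∈ u, W i j := fun i hi ↦ by
    rw [filter_union, filter_true_of_mem (htu i hi),
      sum_union (hdisj.mono_left (filter_subset _ _))]
  have hu : ∀ i ∈ u, ∑ j ∈ t ∪ u with i < j, W i j = ∑ j ∈ u with i < j, W i j := fun i hi ↦ by
    rw [filter_union, filter_false_of_mem fun j hj ↦ (htu j hj i hi).not_gt, empty_union]
  rw [sum_union hdisj, sum_congr rfl ht, sum_congr rfl hu, sum_add_distrib, add_right_comm]

theorem sum_filter_lt_le_nsmul_of_card_le_two_pow {M : Type*} [AddCommMonoid M] [PartialOrder M]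
    [IsOrderedAddMonoid M] {W : ι → ι → M} {p q : ι → M}
    (hW : ∀ s t : Finset ι, (∀ i ∈ s, ∀ j ∈ t, i < j) →
      ∑ i ∈ s, ∑ j ∈ t, W i j ≤ ∑ i ∈ s, p i + ∑ j ∈ t, q j)
    (m : ℕ) (s : Finset ι) (hs : #s ≤ 2 ^ m) :
    ∑ i ∈ s, ∑ j ∈ s with i < j, W i j ≤ m • (∑ i ∈ s, p i + ∑ i ∈ s, q i) := by
  induction m generalizing s with
  | zero =>
    have hone := card_le_one.1 hs
    rw [zero_smul]
    exact (sum_eq_zero fun i hi ↦ by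
      rw [filter_false_of_mem fun j hj ↦ (hone i hi j hj).not_lt, sum_empty]).le
  | succ m ih =>
    obtain ⟨t, u, rfl, htu, ht, hu⟩ :=
      exists_union_eq_forall_lt_card_le (2 ^ m) (2 ^ m) s (by rwa [← two_mul, ← pow_succ'])
    have hdisj : Disjoint t u := disjoint_left.2 fun i hi hi' ↦ (htu i hi i hi').false
    have hp : 0 ≤ ∑ i ∈ u, p i := by simpa using hW u ∅
    have hq : 0 ≤ ∑ i ∈ t, q i := by simpa using hW ∅ t
    rw [sum_union_sum_filter_lt W htu, sum_union hdisj, sum_union hdisj, succ_nsmul]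
    calc _ ≤ m • (∑ i ∈ t, p i + ∑ i ∈ t, q i) + m • (∑ i ∈ u, p i + ∑ i ∈ u, q i) +
          (∑ i ∈ t, p i + ∑ i ∈ u, q i) := by gcongr <;> grind
      _ ≤ m • (∑ i ∈ t, p i + ∑ i ∈ t, q i) + m • (∑ i ∈ u, p i + ∑ i ∈ u, q i) +
          (∑ i ∈ t, p i + ∑ i ∈ u, q i) + (∑ i ∈ u, p i + ∑ i ∈ t, q i) :=
        le_add_of_nonneg_right (add_nonneg hp hq)
      _ = _ := by simp only [nsmul_add]; abel

end DyadicSplitting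

section InnerProduct

open scoped InnerProductSpace

variable {E : Type*} [NormedAddCommGroup E] [InnerProductSpace ℝ E]

theorem norm_sum_sq_eq_sum_add_two_mul_inner {ι : Type*} [LinearOrder ι] (a : ι → E)
    (s : Finset ι) :
    ‖∑ k ∈ s, a k‖ ^ 2 = ∑ k ∈ s, (‖a k‖ ^ 2 + 2 * ⟪∑ j ∈ s with j < k, a j, a k⟫_ℝ) := by
  induction s using Finset.induction_on_max with
  | empty => simp
  | insert m s hm ih =>
    have hms : m ∉ s := fun h ↦ (hm m h).false
    have hs : ∀ k ∈ s, ‖a k‖ ^ 2 + 2 * ⟪∑ j ∈ insert m s with j < k, a j, a k⟫_ℝ =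
        ‖a k‖ ^ 2 + 2 * ⟪∑ j ∈ s with j < k, a j, a k⟫_ℝ := fun k hk ↦ by
      rw [filter_insert, if_neg (hm k hk).not_gt]
    rw [sum_insert hms, sum_insert hms, filter_insert, if_neg (lt_irrefl m),
      filter_true_of_mem hm, sum_congr rfl hs, ← ih, norm_add_sq_real, real_inner_comm]

theorem inner_add_mul_inner_add_le_of_isMinOn_prox {ℓ : E →ₗ[ℝ] ℝ} {P : ℝ} {h : E → ℝ} {X : Set E}
    (hh : ConvexOn ℝ X h) {x z : E} (hz : z ∈ X)
    (hmin : IsMinOn (fun y ↦ ℓ (y - x) + P / 2 * ‖y - x‖ ^ 2 + h y) X z) {y : E} (hy : y ∈ X) :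
    ℓ (z - y) + P * ⟪z - x, z - y⟫_ℝ + h z ≤ h y := by
  have hseg : ∀ s ∈ Set.Ioc (0 : ℝ) 1,
      ℓ (z - y) + P * ⟪z - x, z - y⟫_ℝ + h z - h y ≤ s * (P / 2 * ‖z - y‖ ^ 2) := by
    rintro s ⟨hs0, hs1⟩
    have hs1' : 0 ≤ 1 - s := sub_nonneg.2 hs1
    have hle := isMinOn_iff.1 hmin _ (hh.1 hz hy hs1' hs0.le (sub_add_cancel 1 s))
    have hconv := hh.2 hz hy hs1' hs0.le (sub_add_cancel 1 s)
    have hpt : (1 - s) • z + s • y - x = (z - x) - s • (z - y) := by module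
    simp only [hpt, map_sub ℓ (z - x), map_smul, norm_sub_sq_real (z - x), inner_smul_right,
      norm_smul, mul_pow, Real.norm_eq_abs, sq_abs, smul_eq_mul] at hle hconv
    refine le_of_mul_le_mul_left ?_ hs0
    linarith
  have hlim : Filter.Tendsto (fun s : ℝ ↦ s * (P / 2 * ‖z - y‖ ^ 2)) (nhdsWithin 0 (Set.Ioi 0))
      (nhds 0) :=
    ((continuous_mul_const _).tendsto' 0 0 (zero_mul _)).mono_left nhdsWithin_le_nhds
  have := ge_of_tendsto hlim (Filter.eventually_of_mem (Ioc_mem_nhdsGT one_pos) hseg)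
  linarith

end InnerProduct

section BlockProblem

open scoped InnerProductSpace

variable {ι : Type*} [Fintype ι] {E : ι → Type*} [∀ k, NormedAddCommGroup (E k)]
  [∀ k, InnerProductSpace ℝ (E k)] {F : Type*} [NormedAddCommGroup F] [InnerProductSpace ℝ F]

/-- `L` is an upper bound for the squared operator norm of `v ↦ ∑ k, T k (v k)` on the `ℓ²` product
of the blocks, that is, for `λ_max(TᵀT)` when everything is finite-dimensional. -/
def BlockNormSqLE (T : ∀ k, E k →ₗ[ℝ] F) (L : ℝ) : Prop :=
  ∀ v : ∀ k, E k, ‖∑ k, T k (v k)‖ ^ 2 ≤ L * ∑ k, ‖v k‖ ^ 2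

/-- The residual `∑ k, T k (x k) - b` of a block least-squares problem. -/
def blockResidual (T : ∀ k, E k →ₗ[ℝ] F) (b : F) (x : ∀ k, E k) : F :=
  ∑ k, T k (x k) - b

/-- The composite objective `f` of the block problem: half the squared residual plus the separable
term `∑ k, h k (x k)`. -/
noncomputable def blockObjective (T : ∀ k, E k →ₗ[ℝ] F) (b : F) (h : ∀ k, E k → ℝ)
    (x : ∀ k, E k) : ℝ :=
  1 / 2 * ‖blockResidual T b x‖ ^ 2 + ∑ k, h k (x k)

/-- The error form of one cycle: the block upper triangular truncation, diagonal included, of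
`(u, v) ↦ ⟪T u, T v⟫`, minus the contribution `L ⟪u, v⟫` of the proximal terms. -/
def cycleForm [LinearOrder ι] (T : ∀ k, E k →ₗ[ℝ] F) (L : ℝ) (u v : ∀ k, E k) : ℝ :=
  ∑ k, (∑ j with k ≤ j, ⟪T k (u k), T j (v j)⟫_ℝ - L * ⟪u k, v k⟫_ℝ)

/-- The point at which block `k` is updated during a cycle from `x` to `x'`: the blocks before `k`
have already moved. -/
def cyclePoint {ι : Type*} [LinearOrder ι] {E : ι → Type*} (x x' : ∀ k, E k) (k : ι) : ∀ k, E k :=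
  fun j ↦ if j < k then x' j else x j

/-- One cycle of block coordinate proximal gradient steps from `x` to `x'` with parameter `L`.
The pairing `⟪∇ₖ g(w), y - x k⟫` with the partial gradient of the quadratic part `g` is written as
`⟪residual at w, T k (y - x k)⟫`, which needs no adjoint. -/
def IsCyclicProxStep [LinearOrder ι] (T : ∀ k, E k →ₗ[ℝ] F) (b : F) (h : ∀ k, E k → ℝ)
    (X : ∀ k, Set (E k)) (L : ℝ) (x x' : ∀ k, E k) : Prop :=
  ∀ k, x' k ∈ X k ∧ IsMinOn (fun y ↦ ⟪blockResidual T b (cyclePoint x x' k), T k (y - x k)⟫_ℝ +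
    L / 2 * ‖y - x k‖ ^ 2 + h k y) (X k) (x' k)

variable {T : ∀ k, E k →ₗ[ℝ] F} {b : F} {h : ∀ k, E k → ℝ} {X : ∀ k, Set (E k)} {L : ℝ}
  {x x' y u v : ∀ k, E k}

theorem blockResidual_eq_add_sum :
    blockResidual T b x' = blockResidual T b x + ∑ j, T j (x' j - x j) := by
  simp only [blockResidual, map_sub, sum_sub_distrib]
  abel

namespace BlockNormSqLE

theorem norm_sum_sq_le (hT : BlockNormSqLE T L) (v : ∀ k, E k) (s : Finset ι) :
    ‖∑ k ∈ s, T k (v k)‖ ^ 2 ≤ L * ∑ k ∈ s, ‖v k‖ ^ 2 := by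
  classical
  have := hT (s.piecewise v 0)
  simpa only [Finset.piecewise, apply_ite (T _), apply_ite (‖·‖ ^ 2), Pi.zero_apply, map_zero,
    norm_zero, ne_eq, OfNat.ofNat_ne_zero, not_false_eq_true, zero_pow, sum_ite_mem,
    univ_inter] using this

theorem norm_apply_sq_le (hT : BlockNormSqLE T L) (k : ι) (w : E k) :
    ‖T k w‖ ^ 2 ≤ L * ‖w‖ ^ 2 := by
  classical
  simpa using hT.norm_sum_sq_le (Pi.single k w) {k}

theorem inner_sum_sum_le_of_disjoint (hT : BlockNormSqLE T L) (u v : ∀ k, E k) {s t : Finset ι}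
    (hst : Disjoint s t) :
    ⟪∑ k ∈ s, T k (u k), ∑ k ∈ t, T k (v k)⟫_ℝ ≤
      L / 4 * (∑ k ∈ s, ‖u k‖ ^ 2 + ∑ k ∈ t, ‖v k‖ ^ 2) := by
  classical
  have hs : ∀ k ∈ s, s.piecewise u v k = u k := fun k hk ↦ piecewise_eq_of_mem s u v hk
  have ht : ∀ k ∈ t, s.piecewise u v k = v k := fun k hk ↦
    piecewise_eq_of_notMem s u v (disjoint_right.1 hst hk)
  have hadd : ‖∑ k ∈ s, T k (u k) + ∑ k ∈ t, T k (v k)‖ ^ 2 ≤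
      L * (∑ k ∈ s, ‖u k‖ ^ 2 + ∑ k ∈ t, ‖v k‖ ^ 2) := by
    convert hT.norm_sum_sq_le (s.piecewise u v) (s ∪ t) using 3 <;> rw [sum_union hst] <;>
      congr 1 <;> exact sum_congr rfl fun k hk ↦ by simp only [hs, ht, hk]
  rw [norm_add_sq_real] at hadd
  have hsub := sq_nonneg ‖∑ k ∈ s, T k (u k) - ∑ k ∈ t, T k (v k)‖
  rw [norm_sub_sq_real] at hsub
  linarith

theorem inner_sub_mul_inner_le (hT : BlockNormSqLE T L) (k : ι) (w z : E k) :
    ⟪T k w, T k z⟫_ℝ - L * ⟪w, z⟫_ℝ ≤ L / 2 * (‖w‖ ^ 2 + ‖z‖ ^ 2) := by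
  have hadd := hT.norm_apply_sq_le k (w + z)
  have hsub := sq_nonneg ‖T k (w - z)‖
  have hsum := (sq_nonneg ‖T k (w + z)‖).trans hadd
  simp only [map_add, map_sub, norm_add_sq_real, norm_sub_sq_real] at hadd hsub hsum
  linarith

end BlockNormSqLE

section LinearOrder

variable [LinearOrder ι]

theorem cycleForm_le (hT : BlockNormSqLE T L) (u v : ∀ k, E k) :
    cycleForm T L u v ≤
      (Nat.clog 2 (Fintype.card ι) + 2) / 4 * L * (∑ k, ‖u k‖ ^ 2 + ∑ k, ‖v k‖ ^ 2) := by
  have hsplit : ∀ k, ∑ j with k ≤ j, ⟪T k (u k), T j (v j)⟫_ℝ =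
      ⟪T k (u k), T k (v k)⟫_ℝ + ∑ j with k < j, ⟪T k (u k), T j (v j)⟫_ℝ := fun k ↦ by
    have hins : univ.filter (k ≤ ·) = insert k (univ.filter (k < ·)) := by
      ext j
      simp [le_iff_eq_or_lt, eq_comm]
    rw [hins, sum_insert (by simp)]
  have hdiag := sum_le_sum fun k (_ : k ∈ univ) ↦ hT.inner_sub_mul_inner_le k (u k) (v k)
  have hoff := sum_filter_lt_le_nsmul_of_card_le_two_pow
    (W := fun k j ↦ ⟪T k (u k), T j (v j)⟫_ℝ) (p := fun k ↦ L / 4 * ‖u k‖ ^ 2)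
    (q := fun k ↦ L / 4 * ‖v k‖ ^ 2) (fun s t hst ↦ by
      have hdisj : Disjoint s t := disjoint_left.2 fun i hi hi' ↦ (hst i hi i hi').false
      simpa only [sum_inner, inner_sum, mul_add, mul_sum, sum_comm (s := t)]
        using hT.inner_sum_sum_le_of_disjoint u v hdisj)
    _ univ (Nat.le_pow_clog one_lt_two (Fintype.card ι))
  simp only [nsmul_eq_mul, ← mul_sum, sum_add_distrib, sum_sub_distrib] at hdiag hoff
  simp only [cycleForm, hsplit, sum_add_distrib, sum_sub_distrib, ← mul_sum]
  linarith

theorem cycleForm_smul_right (t : ℝ) : cycleForm T L u (t • v) = t * cycleForm T L u v := by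
  simp only [cycleForm, Pi.smul_apply, map_smul, inner_smul_right, mul_sum, mul_sub,
    mul_left_comm t L]

theorem cycleForm_sq_le (hT : BlockNormSqLE T L) (u v : ∀ k, E k) :
    cycleForm T L u v ^ 2 ≤
      4 * ((Nat.clog 2 (Fintype.card ι) + 2) / 4 * L) ^ 2 *
        ((∑ k, ‖u k‖ ^ 2) * ∑ k, ‖v k‖ ^ 2) := by
  refine sq_le_of_forall_mul_le fun t ↦ ?_
  simpa only [cycleForm_smul_right, Pi.smul_apply, norm_smul, mul_pow, Real.norm_eq_abs, sq_abs,
    ← mul_sum] using cycleForm_le hT u (t • v)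

theorem blockResidual_cyclePoint (k : ι) :
    blockResidual T b (cyclePoint x x' k) =
      blockResidual T b x + ∑ j with j < k, T j (x' j - x j) := by
  rw [blockResidual_eq_add_sum (x := x), sum_filter]
  congr! 2 with j
  by_cases hj : j < k <;> simp [cyclePoint, hj]

theorem blockResidual_eq_cyclePoint_add (k : ι) :
    blockResidual T b x' =
      blockResidual T b (cyclePoint x x' k) + ∑ j with k ≤ j, T j (x' j - x j) := by
  rw [blockResidual_eq_add_sum (x := cyclePoint x x' k), sum_filter]
  congr! 2 with j
  by_cases hj : j < k <;> simp [cyclePoint, hj, not_le, not_lt.1]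

namespace IsCyclicProxStep

theorem variational_inequality (hh : ∀ k, ConvexOn ℝ (X k) (h k))
    (hstep : IsCyclicProxStep T b h X L x x') {k : ι} {y : E k} (hy : y ∈ X k) :
    ⟪blockResidual T b (cyclePoint x x' k), T k (x' k - y)⟫_ℝ + L * ⟪x' k - x k, x' k - y⟫_ℝ +
      h k (x' k) ≤ h k y :=
  inner_add_mul_inner_add_le_of_isMinOn_prox
    (ℓ := innerₗ F (blockResidual T b (cyclePoint x x' k)) ∘ₗ T k) (hh k) (hstep k).1 (hstep k).2 hy

theorem blockObjective_add_le (hh : ∀ k, ConvexOn ℝ (X k) (h k)) (hT : BlockNormSqLE T L)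
    (hstep : IsCyclicProxStep T b h X L x x') (hx : x ∈ Set.univ.pi X) :
    blockObjective T b h x' + L / 2 * ∑ k, ‖x' k - x k‖ ^ 2 ≤ blockObjective T b h x := by
  have hblock : ∀ k, ⟪blockResidual T b x, T k (x' k - x k)⟫_ℝ +
      1 / 2 * (‖T k (x' k - x k)‖ ^ 2 +
        2 * ⟪∑ j with j < k, T j (x' j - x j), T k (x' k - x k)⟫_ℝ) +
      L / 2 * ‖x' k - x k‖ ^ 2 + h k (x' k) ≤ h k (x k) := fun k ↦ by
    have hvi := hstep.variational_inequality hh (hx k trivial)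
    have hnorm := hT.norm_apply_sq_le k (x' k - x k)
    rw [blockResidual_cyclePoint, inner_add_left, real_inner_self_eq_norm_sq] at hvi
    linarith
  have hsum := sum_le_sum fun k (_ : k ∈ univ) ↦ hblock k
  rw [sum_add_distrib, sum_add_distrib, sum_add_distrib, ← inner_sum, ← mul_sum, ← mul_sum,
    ← norm_sum_sq_eq_sum_add_two_mul_inner] at hsum
  rw [blockObjective, blockObjective, blockResidual_eq_add_sum (x := x) (x' := x'),
    norm_add_sq_real]
  linarith

theorem blockObjective_sub_le_cycleForm (hh : ∀ k, ConvexOn ℝ (X k) (h k))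
    (hstep : IsCyclicProxStep T b h X L x x') (hy : y ∈ Set.univ.pi X) :
    blockObjective T b h x' - blockObjective T b h y ≤ cycleForm T L (x' - y) (x' - x) := by
  have hblock : ∀ k, ⟪blockResidual T b x', T k (x' k - y k)⟫_ℝ + h k (x' k) - h k (y k) ≤
      ∑ j with k ≤ j, ⟪T k (x' k - y k), T j (x' j - x j)⟫_ℝ -
        L * ⟪x' k - y k, x' k - x k⟫_ℝ := fun k ↦ by
    have hvi := hstep.variational_inequality hh (hy k trivial)
    rw [blockResidual_eq_cyclePoint_add (x := x) k, inner_add_left, ← inner_sum,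
      real_inner_comm (x' k - x k), real_inner_comm (T k (x' k - y k)) (∑ j with k ≤ j, _)]
    linarith
  have hsum := sum_le_sum fun k (_ : k ∈ univ) ↦ hblock k
  rw [sum_sub_distrib, sum_add_distrib, ← inner_sum] at hsum
  have hg : 0 ≤ ‖∑ k, T k (x' k - y k)‖ ^ 2 := sq_nonneg _
  have hres : ∑ k, T k (x' k - y k) = blockResidual T b x' - blockResidual T b y :=
    eq_sub_of_add_eq' blockResidual_eq_add_sum.symm
  rw [hres, norm_sub_sq_real] at hg
  rw [hres, inner_sub_right, real_inner_self_eq_norm_sq] at hsum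
  simp only [blockObjective, cycleForm, Pi.sub_apply]
  linarith

theorem sq_blockObjective_sub_le (hh : ∀ k, ConvexOn ℝ (X k) (h k)) (hL : 0 ≤ L)
    (hT : BlockNormSqLE T L) (hstep : IsCyclicProxStep T b h X L x x') (hx : x ∈ Set.univ.pi X)
    (hy : y ∈ Set.univ.pi X) (hyx : blockObjective T b h y ≤ blockObjective T b h x') {R : ℝ}
    (hR : ∑ k, ‖x' k - y k‖ ^ 2 ≤ R ^ 2) :
    (blockObjective T b h x' - blockObjective T b h y) ^ 2 ≤
      (Nat.clog 2 (Fintype.card ι) + 2) ^ 2 * L * R ^ 2 / 2 *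
        (blockObjective T b h x - blockObjective T b h x') := by
  set c : ℝ := Nat.clog 2 (Fintype.card ι) + 2
  set f := blockObjective T b h
  have hdesc : L * ∑ k, ‖x' k - x k‖ ^ 2 ≤ 2 * (f x - f x') := by
    linarith [hstep.blockObjective_add_le hh hT hx]
  calc (f x' - f y) ^ 2 ≤ cycleForm T L (x' - y) (x' - x) ^ 2 :=
        pow_le_pow_left₀ (sub_nonneg.2 hyx) (hstep.blockObjective_sub_le_cycleForm hh hy) 2
    _ ≤ 4 * (c / 4 * L) ^ 2 * ((∑ k, ‖x' k - y k‖ ^ 2) * ∑ k, ‖x' k - x k‖ ^ 2) :=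
        cycleForm_sq_le hT _ _
    _ = c ^ 2 * L / 4 * (∑ k, ‖x' k - y k‖ ^ 2) * (L * ∑ k, ‖x' k - x k‖ ^ 2) := by ring
    _ ≤ c ^ 2 * L / 4 * R ^ 2 * (2 * (f x - f x')) := by gcongr
    _ = _ := by ring

end IsCyclicProxStep

theorem bcpg_rate_conservative_general (hh : ∀ k, ConvexOn ℝ (X k) (h k)) (hL : 0 ≤ L)
    (hT : BlockNormSqLE T L) {x : ℕ → ∀ k, E k} (hx0 : x 0 ∈ Set.univ.pi X)
    (hstep : ∀ r, IsCyclicProxStep T b h X L (x r) (x (r + 1))) (hy : y ∈ Set.univ.pi X)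
    (hmin : IsMinOn (blockObjective T b h) (Set.univ.pi X) y) {R : ℝ}
    (hR : ∀ z ∈ Set.univ.pi X, blockObjective T b h z ≤ blockObjective T b h (x 0) →
      ∑ k, ‖z k - y k‖ ^ 2 ≤ R ^ 2) (r : ℕ) :
    blockObjective T b h (x (r + 1)) - blockObjective T b h y ≤
      max (blockObjective T b h (x 0) - blockObjective T b h y)
        ((Nat.clog 2 (Fintype.card ι) + 2) ^ 2 * L * R ^ 2) / (r + 1) := by
  set f := blockObjective T b h
  have hmem : ∀ r, x r ∈ Set.univ.pi X
    | 0 => hx0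
    | r + 1 => fun k _ ↦ (hstep r k).1
  have hanti : Antitone (f ∘ x) := antitone_nat_of_succ_le fun r ↦ by
    have hdesc := (hstep r).blockObjective_add_le hh hT (hmem r)
    exact le_of_add_le_of_nonneg_left hdesc (by positivity)
  refine le_div_add_one_of_sq_le_mul_sub (a := fun r ↦ f (x (r + 1)) - f y)
    (σ := (Nat.clog 2 (Fintype.card ι) + 2) ^ 2 * L * R ^ 2 / 2) (by positivity)
    ((mul_div_cancel₀ _ two_ne_zero).trans_le (le_max_right _ _))
    (le_max_of_le_left (sub_le_sub_right (hanti zero_le_one) _)) (fun r ↦ ?_) r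
  rw [sub_sub_sub_cancel_right]
  exact (hstep (r + 1)).sq_blockObjective_sub_le hh hL hT (hmem _) hy (hmin (hmem _))
    (hR _ (hmem _) (hanti (Nat.zero_le _)))

end LinearOrder

theorem BlockNormSqLE.of_norm_le {c : ι → ℝ} (hc : ∀ k w, ‖T k w‖ ≤ c k * ‖w‖) :
    BlockNormSqLE T (∑ k, c k ^ 2) := fun v ↦
  calc ‖∑ k, T k (v k)‖ ^ 2 ≤ (∑ k, c k * ‖v k‖) ^ 2 := by
        gcongr
        exact norm_sum_le_of_le _ fun k _ ↦ hc k (v k)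
    _ ≤ (∑ k, c k ^ 2) * ∑ k, ‖v k‖ ^ 2 := sum_mul_sq_le_sq_mul_sq _ _ _

theorem BlockNormSqLE.of_unit
    (hunit : ∀ v : ∀ k, E k, ∑ k, ‖v k‖ ^ 2 = 1 → ‖∑ k, T k (v k)‖ ^ 2 ≤ L) :
    BlockNormSqLE T L := fun v ↦ by
  rcases (sum_nonneg fun k _ ↦ sq_nonneg ‖v k‖ : 0 ≤ ∑ k, ‖v k‖ ^ 2).eq_or_lt with h0 | hpos
  · have hv : ∀ k, v k = 0 := by simpa [sum_eq_zero_iff_of_nonneg] using h0.symm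
    simp [hv]
  have hc : ((√(∑ k, ‖v k‖ ^ 2))⁻¹) ^ 2 = (∑ k, ‖v k‖ ^ 2)⁻¹ := by
    rw [inv_pow, Real.sq_sqrt hpos.le]
  have hle := hunit ((√(∑ k, ‖v k‖ ^ 2))⁻¹ • v) (by
    simp only [Pi.smul_apply, norm_smul, mul_pow, Real.norm_eq_abs, sq_abs, ← mul_sum, hc]
    exact inv_mul_cancel₀ hpos.ne')
  simp only [Pi.smul_apply, map_smul, ← smul_sum, norm_smul, mul_pow, Real.norm_eq_abs, sq_abs,
    hc] at hle
  rwa [inv_mul_le_iff₀ hpos, mul_comm] at hle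

end BlockProblem

theorem clog_two_mul_log_two_le {K : ℕ} (hK : K ≠ 0) :
    Nat.clog 2 K * Real.log 2 ≤ Real.log (2 * K) := by
  have hlog2 := Real.log_pos one_lt_two
  have hlogb : 0 ≤ Real.logb 2 K := Real.logb_nonneg one_lt_two (by exact_mod_cast hK.bot_lt)
  have hlt : (Nat.clog 2 K : ℝ) ≤ Real.logb 2 K + 1 := by
    rw [← Real.natCeil_logb_natCast]
    exact_mod_cast (Nat.ceil_lt_add_one hlogb).le
  calc Nat.clog 2 K * Real.log 2 ≤ (Real.logb 2 K + 1) * Real.log 2 := by gcongr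
    _ = Real.log (2 * K) := by
      rw [Real.log_mul two_ne_zero (Nat.cast_ne_zero.2 hK), add_mul, Real.logb,
        div_mul_cancel₀ _ hlog2.ne', one_mul, add_comm]

theorem sq_clog_two_add_two_le {n K : ℕ} (hK : K ≠ 0) (hKn : K ≤ n) (hn : 3 ≤ n) :
    (Nat.clog 2 K + 2 : ℝ) ^ 2 ≤ 12 * Real.log (2 * n) ^ 2 := by
  have hn' : (3 : ℝ) ≤ n := by exact_mod_cast hn
  set l := Real.log (2 * n) with hl
  have hone : 1 ≤ l := by
    rw [hl, Real.le_log_iff_exp_le (by positivity)]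
    linarith [Real.exp_one_lt_three]
  have hclog : Nat.clog 2 K * Real.log 2 ≤ l :=
    (clog_two_mul_log_two_le hK).trans (Real.log_le_log (by positivity) (by gcongr))
  have hlog2 : (Nat.clog 2 K : ℝ) * 0.693 ≤ Nat.clog 2 K * Real.log 2 := by
    gcongr
    linarith [Real.log_two_gt_d9]
  -- `1 / 0.693 + 2 < 3.46 < √12`
  calc (Nat.clog 2 K + 2 : ℝ) ^ 2 ≤ (3.46 * l) ^ 2 := by gcongr; linarith
    _ ≤ 12 * l ^ 2 := by rw [mul_pow]; gcongr; norm_num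

theorem max_sq_clog_mul_le_three_mul_max_sq_log_mul {n K : ℕ} (hK : K ≠ 0) (hKn : K ≤ n)
    (hn : 3 ≤ n) {a L R : ℝ} (ha : 0 ≤ a) (hL : 0 ≤ L) :
    max a ((Nat.clog 2 K + 2) ^ 2 * L * R ^ 2) ≤
      3 * max a (4 * Real.log (2 * n) ^ 2 * L * R ^ 2) := by
  rw [mul_max_of_nonneg _ _ zero_le_three]
  refine max_le_max (by linarith) ?_
  calc (Nat.clog 2 K + 2 : ℝ) ^ 2 * L * R ^ 2
      ≤ 12 * Real.log (2 * n) ^ 2 * L * R ^ 2 := by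
        gcongr
        exact sq_clog_two_add_two_le hK hKn hn
    _ = 3 * (4 * Real.log (2 * n) ^ 2 * L * R ^ 2) := by ring

section Euclidean

open WithLp (toLp ofLp)

open scoped InnerProductSpace

variable {K M N : ℕ} {A : Fin K → Matrix (Fin M) (Fin N) ℝ} {b : Fin M → ℝ}
  {h : Fin K → (Fin N → ℝ) → ℝ} {X : Fin K → Set (Fin N → ℝ)} {x x' : Fin K → Fin N → ℝ}

/-- The matrices `A k` as operators between Euclidean spaces. -/
noncomputable def blockOp (A : Fin K → Matrix (Fin M) (Fin N) ℝ) (k : Fin K) :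
    EuclideanSpace ℝ (Fin N) →ₗ[ℝ] EuclideanSpace ℝ (Fin M) :=
  Matrix.toLpLin 2 2 (A k)

/-- A block vector of coordinate arrays, which carry the sup norm, as a vector of Euclidean
blocks. -/
def euclideanBlocks (x : Fin K → Fin N → ℝ) (k : Fin K) : EuclideanSpace ℝ (Fin N) :=
  toLp 2 (x k)

theorem norm_toLp_sq {n : ℕ} (v : Fin n → ℝ) : ‖toLp 2 v‖ ^ 2 = sqnorm v :=
  EuclideanSpace.real_norm_sq_eq _

theorem inner_toLp_toLp_eq_dotp {n : ℕ} (u v : Fin n → ℝ) : ⟪toLp 2 u, toLp 2 v⟫_ℝ = dotp u v := by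
  rw [EuclideanSpace.inner_toLp_toLp, dotProduct_comm]
  rfl

theorem blockOp_toLp (k : Fin K) (v : Fin N → ℝ) :
    blockOp A k (toLp 2 v) = toLp 2 ((A k).mulVec v) :=
  Matrix.toLpLin_toLp 2 2 (A k) v

theorem sum_blockOp_euclideanBlocks (v : Fin K → Fin N → ℝ) :
    ∑ k, blockOp A k (euclideanBlocks v k) = toLp 2 (∑ k, (A k).mulVec (v k)) := by
  simp only [euclideanBlocks, blockOp_toLp, WithLp.toLp_sum]

theorem blockResidual_euclideanBlocks (x : Fin K → Fin N → ℝ) :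
    blockResidual (blockOp A) (toLp 2 b) (euclideanBlocks x) = toLp 2 (resid A b x) := by
  rw [blockResidual, sum_blockOp_euclideanBlocks, resid, WithLp.toLp_sub]

theorem blockObjective_euclideanBlocks (x : Fin K → Fin N → ℝ) :
    blockObjective (blockOp A) (toLp 2 b) (fun k y ↦ h k (ofLp y)) (euclideanBlocks x) =
      fq A b h x := by
  rw [blockObjective, blockResidual_euclideanBlocks, norm_toLp_sq]
  rfl

theorem blockNormSqLE_lamMaxBlock (A : Fin K → Matrix (Fin M) (Fin N) ℝ) :
    BlockNormSqLE (blockOp A) (lamMaxBlock A) := by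
  have hbound : BlockNormSqLE (blockOp A) (∑ k, ‖(blockOp A k).toContinuousLinearMap‖ ^ 2) :=
    .of_norm_le fun k ↦ (blockOp A k).toContinuousLinearMap.le_opNorm
  refine .of_unit fun v hv ↦ le_csSup ⟨∑ k, ‖(blockOp A k).toContinuousLinearMap‖ ^ 2, ?_⟩
    ⟨fun k ↦ ofLp (v k), by simpa only [← norm_toLp_sq] using hv, ?_⟩
  · rintro _ ⟨w, hw, rfl⟩
    rw [← norm_toLp_sq, ← sum_blockOp_euclideanBlocks]
    simpa [euclideanBlocks, norm_toLp_sq, hw] using hbound (euclideanBlocks w)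
  · rw [← norm_toLp_sq, ← sum_blockOp_euclideanBlocks]
    rfl

theorem lamMaxBlock_nonneg (A : Fin K → Matrix (Fin M) (Fin N) ℝ) : 0 ≤ lamMaxBlock A :=
  Real.sSup_nonneg fun _ ⟨_, _, hr⟩ ↦ hr ▸ sum_nonneg fun _ _ ↦ sq_nonneg _

theorem gradk_dotp (k : Fin K) (v : Fin N → ℝ) :
    dotp (gradk A b x k) v = dotp (resid A b x) ((A k).mulVec v) := by
  rw [gradk, Matrix.mulVec_transpose]
  exact (Matrix.dotProduct_mulVec _ _ _).symm

theorem BCPGStep.isCyclicProxStep {L : ℝ} (hstep : BCPGStep A b h X (fun _ ↦ L) x x') :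
    IsCyclicProxStep (blockOp A) (toLp 2 b) (fun k y ↦ h k (ofLp y))
      (fun k ↦ ofLp ⁻¹' X k) L (euclideanBlocks x) (euclideanBlocks x') := fun k ↦ by
  have hpoint : cyclePoint (euclideanBlocks x) (euclideanBlocks x') k =
      euclideanBlocks (wpt x x' k) :=
    funext fun j ↦ (apply_ite (toLp 2) (j < k) (x' j) (x j)).symm
  have hobj : ∀ y : Fin N → ℝ,
      ⟪blockResidual (blockOp A) (toLp 2 b)
        (cyclePoint (euclideanBlocks x) (euclideanBlocks x') k),
        blockOp A k (toLp 2 y - euclideanBlocks x k)⟫_ℝ +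
      L / 2 * ‖toLp 2 y - euclideanBlocks x k‖ ^ 2 + h k y = bcpgObj A b h (fun _ ↦ L) x x' k y :=
    fun y ↦ by
      rw [hpoint, blockResidual_euclideanBlocks, euclideanBlocks, ← WithLp.toLp_sub, blockOp_toLp,
        inner_toLp_toLp_eq_dotp, norm_toLp_sq, ← gradk_dotp]
      rfl
  exact ⟨(hstep k).1, fun y hy ↦
    (hobj (x' k)).trans_le (((hstep k).2 (ofLp y) hy).trans_eq (hobj (ofLp y)).symm)⟩

theorem fq_sub_le_max_div (hh : ∀ k, ConvexOn ℝ (X k) (h k)) {x : ℕ → Fin K → Fin N → ℝ}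
    (hx0 : ∀ k, x 0 k ∈ X k)
    (hstep : ∀ r, BCPGStep A b h X (fun _ ↦ lamMaxBlock A) (x r) (x (r + 1)))
    {y : Fin K → Fin N → ℝ} (hy : ∀ k, y k ∈ X k)
    (hmin : ∀ z : Fin K → Fin N → ℝ, (∀ k, z k ∈ X k) → fq A b h y ≤ fq A b h z) {R : ℝ}
    (hR : ∀ z : Fin K → Fin N → ℝ, (∀ k, z k ∈ X k) → fq A b h z ≤ fq A b h (x 0) →
      ∑ k, sqnorm (z k - y k) ≤ R ^ 2) (r : ℕ) :
    fq A b h (x (r + 1)) - fq A b h y ≤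
      max (fq A b h (x 0) - fq A b h y)
        ((Nat.clog 2 K + 2) ^ 2 * lamMaxBlock A * R ^ 2) / (r + 1) := by
  have hobj (z : Fin K → EuclideanSpace ℝ (Fin N)) :=
    blockObjective_euclideanBlocks (A := A) (b := b) (h := h) fun k ↦ ofLp (z k)
  have hrate := bcpg_rate_conservative_general (T := blockOp A) (b := toLp 2 b)
    (h := fun k z ↦ h k (ofLp z)) (X := fun k ↦ ofLp ⁻¹' X k)
    (x := fun r ↦ euclideanBlocks (x r)) (y := euclideanBlocks y) (R := R)
    (fun k ↦ (hh k).comp_linearMap (WithLp.linearEquiv 2 ℝ (Fin N → ℝ)).toLinearMap)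
    (lamMaxBlock_nonneg A) (blockNormSqLE_lamMaxBlock A) (fun k _ ↦ hx0 k)
    (fun r ↦ (hstep r).isCyclicProxStep) (fun k _ ↦ hy k)
    (fun z hz ↦ ?_) (fun z hz hzx ↦ ?_) r
  · simpa only [blockObjective_euclideanBlocks, Fintype.card_fin] using hrate
  · exact (blockObjective_euclideanBlocks y).trans_le
      ((hmin _ fun k ↦ hz k trivial).trans_eq (hobj z).symm)
  · rw [blockObjective_euclideanBlocks] at hzx
    have hdist := hR (fun k ↦ ofLp (z k)) (fun k ↦ hz k trivial) ((hobj z).symm.trans_le hzx)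
    simp only [← norm_toLp_sq] at hdist
    exact hdist

end Euclidean

/-- Theorem 1, part 1: cyclic BCPG with conservative stepsizes
`P_k = L` satisfies `Δ^{(r+1)} ≤ 3 max{Δ^{(0)}, 4 log²(2NK) L R_0²}/(r+1)`. -/
theorem bcpg_rate_conservative {K M N : ℕ} (hK : 1 ≤ K) (hM : 1 ≤ M) (hN : 1 ≤ N)
    (hNK : 3 ≤ N * K)
    (A : Fin K → Matrix (Fin M) (Fin N) ℝ) (b : Fin M → ℝ)
    (X : Fin K → Set (Fin N → ℝ)) (h : Fin K → (Fin N → ℝ) → ℝ)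
    (hXne : ∀ k, (X k).Nonempty) (hXcl : ∀ k, IsClosed (X k))
    (hXcv : ∀ k, Convex ℝ (X k))
    (hhcv : ∀ k, ConvexOn ℝ Set.univ (h k))
    (hhlsc : ∀ k, LowerSemicontinuous (h k))
    (P : Fin K → ℝ) (hP : ∀ k, P k = lamMaxBlock A)
    (x : ℕ → Fin K → Fin N → ℝ) (hx0 : ∀ k, x 0 k ∈ X k)
    (hstep : ∀ r : ℕ, BCPGStep A b h X P (x r) (x (r + 1)))
    (xstar : Fin K → Fin N → ℝ) (hxstarX : ∀ k, xstar k ∈ X k)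
    (hxstar : ∀ y : Fin K → Fin N → ℝ, (∀ k, y k ∈ X k) → fq A b h xstar ≤ fq A b h y)
    (R0 : ℝ)
    (hR0 : ∀ z : Fin K → Fin N → ℝ, (∀ k, z k ∈ X k) → fq A b h z ≤ fq A b h (x 0) →
      ∀ y : Fin K → Fin N → ℝ, (∀ k, y k ∈ X k) →
        (∀ z' : Fin K → Fin N → ℝ, (∀ k, z' k ∈ X k) → fq A b h y ≤ fq A b h z') →
        Real.sqrt (∑ k, sqnorm (z k - y k)) ≤ R0)
    (r : ℕ) :
    fq A b h (x (r + 1)) - fq A b h xstar ≤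
      3 * max (fq A b h (x 0) - fq A b h xstar)
          (4 * Real.log (2 * (N : ℝ) * (K : ℝ)) ^ 2 * lamMaxBlock A * R0 ^ 2) /
        (r + 1) := by
  obtain rfl : P = fun _ ↦ lamMaxBlock A := funext hP
  have hrate := fq_sub_le_max_div (fun k ↦ (hhcv k).subset (Set.subset_univ _) (hXcv k)) hx0 hstep
    hxstarX hxstar
    (fun z hz hzx ↦ (Real.sqrt_le_iff.1 (hR0 z hz hzx xstar hxstarX hxstar)).2) r
  rw [mul_assoc 2, ← Nat.cast_mul]
  refine hrate.trans (div_le_div_of_nonneg_right ?_ r.cast_add_one_pos.le)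
  exact max_sq_clog_mul_le_three_mul_max_sq_log_mul (Nat.ne_of_gt hK)
    (Nat.le_mul_of_pos_left K hN) hNK (sub_nonneg.2 (hxstar _ hx0)) (lamMaxBlock_nonneg A)
end

section
/- For every r ≥ 0, one cycle of the cyclic exact BCD iteration decreases the objective by at least half the squared A-weighted block movement: f(x^{(r)}) − f(x^{(r+1)}) ≥ (1/2) Σ_{k=1}^K ‖A_k (x_k^{(r+1)} − x_k^{(r)})‖². -/
open Finset

/-!
Along the sweep only one block changes at a time, so the total decrease of the objective telescopes
into the decreases of the single block updates. Each block update minimizes a function of the form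
`y ↦ g (A y + c) + ψ y` with `ψ` convex and `g` uniformly convex of modulus `φ`. Comparing the value
at the minimizer `z` with the value at `(1 - t) • z + t • y`, dividing by `t` and letting `t → 0`
shows that the value at `y` exceeds the minimum by at least `φ ‖A (z - y)‖`. For the least-squares
loss `g u = (1/2) ‖u - b‖²` the modulus is `φ r = (1/2) r²`.
-/

section UniformConvex

variable {E F : Type*} [AddCommGroup E] [Module ℝ E] [NormedAddCommGroup F]

lemma le_sub_of_isMinOn_of_forall_combo_le {f : E → ℝ} {s : Set E} {y z : E} {c : ℝ}
    (hs : Convex ℝ s) (hy : y ∈ s) (hz : z ∈ s) (hmin : IsMinOn f s z)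
    (hf : ∀ t ∈ Set.Ioo (0 : ℝ) 1,
      f ((1 - t) • z + t • y) ≤ (1 - t) * f z + t * f y - (1 - t) * t * c) :
    c ≤ f y - f z := by
  have scaled_le : ∀ t ∈ Set.Ioo (0 : ℝ) 1, (1 - t) * c ≤ f y - f z := by
    intro t ht
    have min_le : f z ≤ f ((1 - t) • z + t • y) :=
      hmin (hs hz hy (sub_nonneg.2 ht.2.le) ht.1.le (sub_add_cancel 1 t))
    refine le_of_mul_le_mul_left ?_ ht.1
    linarith [hf t ht]
  have tendsto_scaled : Filter.Tendsto (fun t : ℝ ↦ (1 - t) * c) (nhdsWithin 0 (Set.Ioi 0))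
      (nhds c) := by
    have : Continuous fun t : ℝ ↦ (1 - t) * c := by fun_prop
    simpa using (this.tendsto 0).mono_left nhdsWithin_le_nhds
  exact le_of_tendsto tendsto_scaled
    (Filter.eventually_of_mem (Ioo_mem_nhdsGT one_pos) scaled_le)

lemma modulus_le_sub_of_isMinOn_uniformConvexOn_comp_add [NormedSpace ℝ F] {g : F → ℝ} {φ : ℝ → ℝ}
    {s : Set E} {ψ : E → ℝ} {y z : E} (hg : UniformConvexOn Set.univ φ g) (hψ : ConvexOn ℝ s ψ)
    (A : E →ₗ[ℝ] F) (c : F) (hy : y ∈ s) (hz : z ∈ s)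
    (hmin : IsMinOn (fun v ↦ g (A v + c) + ψ v) s z) :
    φ ‖A (z - y)‖ ≤ (g (A y + c) + ψ y) - (g (A z + c) + ψ z) := by
  refine le_sub_of_isMinOn_of_forall_combo_le hψ.1 hy hz hmin fun t ht ↦ ?_
  have ht' : 0 ≤ 1 - t := sub_nonneg.2 ht.2.le
  have affine_combo :
      A ((1 - t) • z + t • y) + c = (1 - t) • (A z + c) + t • (A y + c) := by
    rw [map_add, map_smul, map_smul]
    module
  have g_le := hg.2 (Set.mem_univ (A z + c)) (Set.mem_univ (A y + c)) ht' ht.1.le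
    (sub_add_cancel 1 t)
  have ψ_le := hψ.2 hz hy ht' ht.1.le (sub_add_cancel 1 t)
  rw [add_sub_add_right_eq_sub, ← map_sub] at g_le
  simp only [smul_eq_mul] at g_le ψ_le
  rw [affine_combo]
  linarith

lemma strongConvexOn_half_norm_sub_sq [InnerProductSpace ℝ F] (b : F) :
    StrongConvexOn Set.univ 1 fun u ↦ (1 / 2) * ‖u - b‖ ^ 2 := by
  have affine_remainder : (fun u ↦ (1 / 2) * ‖u - b‖ ^ 2 - 1 / 2 * ‖u‖ ^ 2)
      = fun u ↦ innerSL ℝ (-b) u + (1 / 2) * ‖b‖ ^ 2 := by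
    funext u
    rw [norm_sub_sq_real, innerSL_apply_apply, inner_neg_left, real_inner_comm]
    ring
  rw [strongConvexOn_iff_convex, affine_remainder]
  exact ((innerSL ℝ (-b)).toLinearMap.convexOn convex_univ).add_const _

end UniformConvex

section Cycle

variable {ι : Type*} [LinearOrder ι] {E : ι → Type*}

/-- The point at which block `k` is updated during a cyclic sweep from `x` to `y`: the blocks
before `k` already have their new value. -/
def sweepPoint (x y : ∀ i, E i) (k : ι) : ∀ i, E i :=
  fun j ↦ if j < k then y j else x j

/-- One cycle of exact block coordinate descent for an arbitrary objective `f`: each block `y k`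
minimizes `f` over `X k`, the other blocks being those of `sweepPoint x y k`. -/
def IsBCDCycle (f : (∀ i, E i) → ℝ) (X : ∀ i, Set (E i)) (x y : ∀ i, E i) : Prop :=
  ∀ k, y k ∈ X k ∧ IsMinOn (fun v ↦ f (Function.update (sweepPoint x y k) k v)) (X k) (y k)

lemma update_sweepPoint_old (x y : ∀ i, E i) (k : ι) :
    Function.update (sweepPoint x y k) k (x k) = sweepPoint x y k := by
  simp [sweepPoint]

-- Restricting the sweep to `s` lets the induction add the blocks in increasing order.
lemma sub_piecewise_eq_sum_sub_update {G : Type*} [AddCommGroup G] (f : (∀ i, E i) → G)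
    (x y : ∀ i, E i) (s : Finset ι) :
    f x - f (s.piecewise y x) = ∑ k ∈ s, (f ({j ∈ s | j < k}.piecewise y x) -
      f (Function.update ({j ∈ s | j < k}.piecewise y x) k (y k))) := by
  induction s using Finset.induction_on_max with
  | empty => simp
  | insert a s hlt ih =>
    have ha : a ∉ s := fun ha ↦ (hlt a ha).false
    have filter_lt_max : {j ∈ insert a s | j < a} = s := by
      rw [filter_insert, if_neg (lt_irrefl a), filter_true_of_mem hlt]
    have filter_lt_of_mem : ∀ k ∈ s, {j ∈ insert a s | j < k} = {j ∈ s | j < k} := fun k hk ↦ by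
      rw [filter_insert, if_neg (hlt k hk).not_gt]
    rw [sum_insert ha, filter_lt_max, ← piecewise_insert,
      sum_congr rfl fun k hk ↦ by rw [filter_lt_of_mem k hk], ← ih]
    abel

lemma sub_eq_sum_sub_update_sweepPoint [Fintype ι] {G : Type*} [AddCommGroup G]
    (f : (∀ i, E i) → G) (x y : ∀ i, E i) :
    f x - f y = ∑ k, (f (Function.update (sweepPoint x y k) k (x k)) -
      f (Function.update (sweepPoint x y k) k (y k))) := by
  have piecewise_filter : ∀ k, ({j | j < k} : Finset ι).piecewise y x = sweepPoint x y k := by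
    intro k
    funext j
    simp [sweepPoint, Finset.piecewise]
  simpa only [piecewise_univ, piecewise_filter, update_sweepPoint_old] using
    sub_piecewise_eq_sum_sub_update f x y univ

end Cycle

section Composite

variable {ι : Type*} [Fintype ι] {E : ι → Type*} {F : Type*}

lemma sum_apply_update_s5 [DecidableEq ι] {G : Type*} [AddCommMonoid G] (u : ∀ i, E i → G)
    (w : ∀ i, E i) (k : ι) (v : E k) :
    ∑ i, u i (Function.update w k v i) = u k v + ∑ i ∈ univ.erase k, u i (w i) := by
  rw [← add_sum_erase univ _ (mem_univ k), Function.update_self]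
  congr 1
  exact sum_congr rfl fun i hi ↦ by rw [Function.update_of_ne (ne_of_mem_erase hi)]

variable [∀ i, AddCommGroup (E i)] [∀ i, Module ℝ (E i)]

/-- The block-separable composite objective `x ↦ g (∑ A_i x_i) + ∑ h_i (x_i)` with loss `g`. -/
def compositeObjective [AddCommMonoid F] [Module ℝ F] (A : ∀ i, E i →ₗ[ℝ] F) (g : F → ℝ)
    (h : ∀ i, E i → ℝ) (x : ∀ i, E i) : ℝ :=
  g (∑ i, A i (x i)) + ∑ i, h i (x i)

variable [NormedAddCommGroup F] [NormedSpace ℝ F] {A : ∀ i, E i →ₗ[ℝ] F} {g : F → ℝ}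
  {h : ∀ i, E i → ℝ} {φ : ℝ → ℝ}

lemma modulus_le_sub_of_isMinOn_update [DecidableEq ι] (hg : UniformConvexOn Set.univ φ g)
    {k : ι} {s : Set (E k)} (hh : ConvexOn ℝ s (h k)) {w : ∀ i, E i} {v z : E k} (hv : v ∈ s)
    (hz : z ∈ s)
    (hmin : IsMinOn (fun u ↦ compositeObjective A g h (Function.update w k u)) s z) :
    φ ‖A k (z - v)‖ ≤ compositeObjective A g h (Function.update w k v) -
      compositeObjective A g h (Function.update w k z) := by
  simp only [compositeObjective, sum_apply_update_s5 (fun i ↦ A i), sum_apply_update_s5 h] at hmin ⊢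
  exact modulus_le_sub_of_isMinOn_uniformConvexOn_comp_add hg (hh.add_const _) (A k) _ hv hz hmin

theorem bcd_sufficient_descent_general [LinearOrder ι] (hg : UniformConvexOn Set.univ φ g)
    {X : ∀ i, Set (E i)} (hh : ∀ i, ConvexOn ℝ (X i) (h i)) {x y : ∀ i, E i}
    (hx : ∀ i, x i ∈ X i) (hcycle : IsBCDCycle (compositeObjective A g h) X x y) :
    ∑ i, φ ‖A i (y i - x i)‖ ≤ compositeObjective A g h x - compositeObjective A g h y := by
  rw [sub_eq_sum_sub_update_sweepPoint]
  exact sum_le_sum fun i _ ↦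
    modulus_le_sub_of_isMinOn_update hg (hh i) (hx i) (hcycle i).1 (hcycle i).2

end Composite

section LeastSquares

variable {K M N : ℕ}

lemma sqnorm_eq_norm_toLp_sq (v : Fin M → ℝ) : sqnorm v = ‖WithLp.toLp 2 v‖ ^ 2 :=
  (EuclideanSpace.real_norm_sq_eq _).symm

/-- The linear map `v ↦ A v` of a matrix with values in Euclidean space, so that `‖A v‖` is the
Euclidean norm rather than the supremum norm of `Fin M → ℝ`. -/
noncomputable def mulVecEuclidean (A : Matrix (Fin M) (Fin N) ℝ) :
    (Fin N → ℝ) →ₗ[ℝ] EuclideanSpace ℝ (Fin M) :=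
  (WithLp.linearEquiv 2 ℝ (Fin M → ℝ)).symm.toLinearMap ∘ₗ A.mulVecLin

lemma sqnorm_mulVec (A : Matrix (Fin M) (Fin N) ℝ) (v : Fin N → ℝ) :
    sqnorm (A.mulVec v) = ‖mulVecEuclidean A v‖ ^ 2 :=
  sqnorm_eq_norm_toLp_sq _

lemma toLp_resid (A : Fin K → Matrix (Fin M) (Fin N) ℝ) (b : Fin M → ℝ) (x : Fin K → Fin N → ℝ) :
    WithLp.toLp 2 (resid A b x) = ∑ k, mulVecEuclidean (A k) (x k) - WithLp.toLp 2 b := by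
  simp [resid, mulVecEuclidean, WithLp.toLp_sum]

lemma fq_eq_compositeObjective (A : Fin K → Matrix (Fin M) (Fin N) ℝ) (b : Fin M → ℝ)
    (h : Fin K → (Fin N → ℝ) → ℝ) :
    fq A b h = compositeObjective (fun k ↦ mulVecEuclidean (A k))
      (fun u ↦ (1 / 2) * ‖u - WithLp.toLp 2 b‖ ^ 2) h := by
  funext x
  rw [fq, gq, sqnorm_eq_norm_toLp_sq, toLp_resid, compositeObjective]

lemma BCDStep.isBCDCycle {A : Fin K → Matrix (Fin M) (Fin N) ℝ} {b : Fin M → ℝ}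
    {h : Fin K → (Fin N → ℝ) → ℝ} {X : Fin K → Set (Fin N → ℝ)} {x xp : Fin K → Fin N → ℝ}
    (hstep : BCDStep A b h X x xp) : IsBCDCycle (fq A b h) X x xp :=
  fun k ↦ ⟨(hstep k).1, isMinOn_iff.2 (hstep k).2⟩

end LeastSquares

/-- Lemma 3, sufficient descent of cyclic exact BCD:
`f(x^{(r)}) − f(x^{(r+1)}) ≥ (1/2) Σ_k ‖A_k(x_k^{(r+1)} − x_k^{(r)})‖²`. -/
theorem bcd_sufficient_descent {K M N : ℕ} (hK : 1 ≤ K) (hM : 1 ≤ M) (hN : 1 ≤ N)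
    (A : Fin K → Matrix (Fin M) (Fin N) ℝ) (b : Fin M → ℝ)
    (X : Fin K → Set (Fin N → ℝ)) (h : Fin K → (Fin N → ℝ) → ℝ)
    (hXne : ∀ k, (X k).Nonempty) (hXcl : ∀ k, IsClosed (X k))
    (hXcv : ∀ k, Convex ℝ (X k))
    (hhcv : ∀ k, ConvexOn ℝ Set.univ (h k))
    (hhlsc : ∀ k, LowerSemicontinuous (h k))
    (x xp : Fin K → Fin N → ℝ) (hx : ∀ k, x k ∈ X k)
    (hstep : BCDStep A b h X x xp) :
    (1 / 2) * ∑ k, sqnorm ((A k).mulVec (xp k - x k)) ≤ fq A b h x - fq A b h xp := by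
  have hcycle := hstep.isBCDCycle
  simp only [fq_eq_compositeObjective, sqnorm_mulVec, mul_sum] at hcycle ⊢
  exact bcd_sufficient_descent_general (strongConvexOn_half_norm_sub_sq (WithLp.toLp 2 b))
    (fun k ↦ (hhcv k).subset (Set.subset_univ _) (hXcv k)) hx hcycle
end
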